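/- Let β ∈ F_2[x,y,z,w] lie in the F_2-subalgebra generated by b_4, b_6, b_7, b_8, and suppose that for some i ≥ 0 the polynomial β·(c'_4)^i satisfies κ(β·(c'_4)^i) = β·(c'_4)^i. Then β = β'·(b_8)^i for some β' in the F_2-subalgebra generated by a_8, a_12, a_14, a_15. -/

import Mathlib

noncomputable section

open MvPolynomial

/-- The set of `𝔽₂`-linear combinations (i.e. subset sums) of the family `v`. -/
def spanF2 {R : Type*} [CommRing R] {n : ℕ} (v : Fin n → R) : Finset R :=
  letI := Classical.decEq R
  Finset.image (fun s : Finset (Fin n) => ∑ j ∈ s, v j) Finset.univ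

/-- The Dickson invariant `D_i(v₁, …, vₙ)`: the `(2^n - 2^(n-i))`-th elementary symmetric
polynomial of the `2^n` elements of the `𝔽₂`-linear span of `v₁, …, vₙ`. -/
def dickson {R : Type*} [CommRing R] {n : ℕ} (v : Fin n → R) (i : ℕ) : R :=
  (spanF2 v).val.esymm (2 ^ n - 2 ^ (n - i))

/-- The product `∏_{α ∈ span_{𝔽₂}(v)} (w + α)`. -/
def prodAdd {R : Type*} [CommRing R] {n : ℕ} (v : Fin n → R) (w : R) : R :=
  ∏ α ∈ spanF2 v, (w + α)

/-- The polynomial ring `𝔽₂[x, y, z, w]`. -/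
abbrev R4 := MvPolynomial (Fin 4) (ZMod 2)

def xP : R4 := X 0
def yP : R4 := X 1
def zP : R4 := X 2
def wP : R4 := X 3

def a8 : R4 := dickson ![xP, yP, zP, wP] 1
def a12 : R4 := dickson ![xP, yP, zP, wP] 2
def a14 : R4 := dickson ![xP, yP, zP, wP] 3
def a15 : R4 := dickson ![xP, yP, zP, wP] 4

def b4 : R4 := dickson ![xP, yP, zP] 1
def b6 : R4 := dickson ![xP, yP, zP] 2
def b7 : R4 := dickson ![xP, yP, zP] 3
def b8 : R4 := prodAdd ![xP, yP, zP] wP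

def c2 : R4 := dickson ![xP, yP] 1
def c3 : R4 := dickson ![xP, yP] 2
def c4' : R4 := prodAdd ![xP, yP] zP
def c4'' : R4 := prodAdd ![xP, yP] wP

/-- The `𝔽₂`-algebra automorphism `κ` of `𝔽₂[x,y,z,w]` fixing `x` and `y` and
exchanging `z` and `w`. -/
def kappaEnd : R4 →ₐ[ZMod 2] R4 := aeval ![xP, yP, wP, zP]


section generic

variable {S : Type*} [CommRing S]

def P2 (x y t : S) : S := t ^ 4 + (x ^ 2 + x * y + y ^ 2) * t ^ 2 + (x ^ 2 * y + x * y ^ 2) * t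

def B4 (x y z : S) : S := (x ^ 2 + x * y + y ^ 2) ^ 2 + P2 x y z
def B6 (x y z : S) : S := (x ^ 2 * y + x * y ^ 2) ^ 2 + (x ^ 2 + x * y + y ^ 2) * P2 x y z
def B7 (x y z : S) : S := (x ^ 2 * y + x * y ^ 2) * P2 x y z

def P3 (x y z t : S) : S := t ^ 8 + B4 x y z * t ^ 4 + B6 x y z * t ^ 2 + B7 x y z * t

theorem P2_prod (h2 : (2 : S) = 0) (x y t : S) : t * (t + x) * (t + y) * (t + (x + y)) = P2 x y t := by
  unfold P2
  linear_combination (t ^ 3 * (x + y) + t ^ 2 * x * y) * h2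

theorem P2_add (h2 : (2 : S) = 0) (x y t u : S) : P2 x y (t + u) = P2 x y t + P2 x y u := by
  unfold P2
  linear_combination (2 * t ^ 3 * u + 3 * t ^ 2 * u ^ 2 + 2 * t * u ^ 3
    + (x ^ 2 + x * y + y ^ 2) * t * u) * h2

theorem P3_eq (h2 : (2 : S) = 0) (x y z t : S) :
    P3 x y z t = P2 x y t * (P2 x y t + P2 x y z) := by
  unfold P3 B4 B6 B7 
  generalize hz : P2 x y z = c
  unfold P2
  generalize (x ^ 2 * y + x * y ^ 2) = c3
  generalize (x ^ 2 + x * y + y ^ 2) = c2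
  linear_combination (- c2 * t ^ 6 - c3 * t ^ 5 - c2 * c3 * t ^ 3) * h2

theorem P3_add (h2 : (2 : S) = 0) (x y z t u : S) :
    P3 x y z (t + u) = P3 x y z t + P3 x y z u := by
  rw [P3_eq h2, P3_eq h2, P3_eq h2, P2_add h2]
  linear_combination (P2 x y t * P2 x y u) * h2

theorem P3_prod (h2 : (2 : S) = 0) (x y z t : S) :
    (t * (t + x) * (t + y) * (t + (x + y))) *
      ((t + z) * (t + (x + z)) * (t + (y + z)) * (t + (x + (y + z)))) = P3 x y z t := by
  rw [P3_eq h2, ← P2_add h2, ← P2_prod h2 x y t, ← P2_prod h2 x y (t + z)]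
  ring

def P4 (x y z w t : S) : S :=
  t ^ 16 + (P3 x y z w + B4 x y z ^ 2) * t ^ 8 + (B4 x y z * P3 x y z w + B6 x y z ^ 2) * t ^ 4
    + (B6 x y z * P3 x y z w + B7 x y z ^ 2) * t ^ 2 + B7 x y z * P3 x y z w * t

theorem P4_eq (h2 : (2 : S) = 0) (x y z w t : S) :
    P4 x y z w t = P3 x y z t * (P3 x y z t + P3 x y z w) := by
  unfold P4
  generalize hz : P3 x y z w = c
  unfold P3
  generalize B4 x y z = b4
  generalize B6 x y z = b6
  generalize B7 x y z = b7
  linear_combination (- b4 * t ^ 12 - b6 * t ^ 10 - b7 * t ^ 9 - b4 * b6 * t ^ 6 - b4 * b7 * t ^ 5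
    - b6 * b7 * t ^ 3) * h2

theorem P4_prod (h2 : (2 : S) = 0) (x y z w t : S) :
    ((t * (t + x) * (t + y) * (t + (x + y))) *
      ((t + z) * (t + (x + z)) * (t + (y + z)) * (t + (x + (y + z))))) *
    (((t + w) * (t + (x + w)) * (t + (y + w)) * (t + (x + (y + w)))) *
      ((t + (z + w)) * (t + (x + (z + w))) * (t + (y + (z + w))) * (t + (x + (y + (z + w))))))
      = P4 x y z w t := by
  rw [P4_eq h2, ← P3_add h2, ← P3_prod h2 x y z t, ← P3_prod h2 x y z (t + w)]
  have e1 (a : S) : t + w + a = t + (a + w) := by ring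
  simp only [e1, add_assoc]

end generic

theorem two_R4 : (2 : R4) = 0 := by
  have := CharP.cast_eq_zero R4 2
  exact_mod_cast this

theorem two_R4X : (2 : Polynomial R4) = 0 := by
  have := CharP.cast_eq_zero (Polynomial R4) 2
  exact_mod_cast this

theorem sum_inj {n : ℕ} (e : Fin n → Fin 4) (he : Function.Injective e) :
    Function.Injective (fun s : Finset (Fin n) => ∑ j ∈ s, (X (e j) : R4)) := by
  intro s t h
  ext j
  have := congrArg (coeff (Finsupp.single (e j) 1)) h
  simp only [coeff_sum, coeff_X, Finsupp.single_left_inj (one_ne_zero), he.eq_iff] at this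
  simp only [Finset.sum_ite_eq'] at this
  by_cases h1 : j ∈ s <;> by_cases h2 : j ∈ t <;> simp_all

theorem prod_span {M : Type*} [CommMonoid M] {n : ℕ} (v : Fin n → R4) (e : Fin n → Fin 4)
    (he : Function.Injective e) (hv : v = fun j => X (e j)) (g : R4 → M) :
    ∏ α ∈ spanF2 v, g α = ∏ s : Finset (Fin n), g (∑ j ∈ s, v j) := by
  subst hv
  unfold spanF2
  exact @Finset.prod_image _ _ _ _ _ (Classical.decEq R4) _ _ (sum_inj e he).injOn

theorem card_span {n : ℕ} (v : Fin n → R4) (e : Fin n → Fin 4)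
    (he : Function.Injective e) (hv : v = fun j => X (e j)) :
    (spanF2 v).card = 2 ^ n := by
  subst hv
  unfold spanF2
  refine (@Finset.card_image_of_injective _ _ _ (Classical.decEq R4) _ (sum_inj e he)).trans ?_
  simp

theorem prod2 {M : Type*} [CommMonoid M] (v : Fin 2 → R4) (g : R4 → M) :
    ∏ s : Finset (Fin 2), g (∑ j ∈ s, v j) =
      g 0 * g (v 0) * g (v 1) * g (v 0 + v 1) := by
  have : (Finset.univ : Finset (Finset (Fin 2))) = {∅, {0}, {1}, {0, 1}} := by decide
  rw [this]
  repeat rw [Finset.prod_insert (by decide)]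
  simp [mul_assoc]

theorem prod3 {M : Type*} [CommMonoid M] (v : Fin 3 → R4) (g : R4 → M) :
    ∏ s : Finset (Fin 3), g (∑ j ∈ s, v j) =
      (g 0 * g (v 0) * g (v 1) * g (v 0 + v 1)) *
      (g (v 2) * g (v 0 + v 2) * g (v 1 + v 2) * g (v 0 + (v 1 + v 2))) := by
  have : (Finset.univ : Finset (Finset (Fin 3))) =
    {∅, {0}, {1}, {0, 1}, {2}, {0, 2}, {1, 2}, {0, 1, 2}} := by decide
  rw [this]
  repeat rw [Finset.prod_insert (by decide)]
  simp [mul_assoc]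

theorem prod4 {M : Type*} [CommMonoid M] (v : Fin 4 → R4) (g : R4 → M) :
    ∏ s : Finset (Fin 4), g (∑ j ∈ s, v j) =
      ((g 0 * g (v 0) * g (v 1) * g (v 0 + v 1)) *
      (g (v 2) * g (v 0 + v 2) * g (v 1 + v 2) * g (v 0 + (v 1 + v 2)))) *
      ((g (v 3) * g (v 0 + v 3) * g (v 1 + v 3) * g (v 0 + (v 1 + v 3))) *
      (g (v 2 + v 3) * g (v 0 + (v 2 + v 3)) * g (v 1 + (v 2 + v 3))
        * g (v 0 + (v 1 + (v 2 + v 3))))) := by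
  have : (Finset.univ : Finset (Finset (Fin 4))) =
    {∅, {0}, {1}, {0, 1}, {2}, {0, 2}, {1, 2}, {0, 1, 2},
     {3}, {0, 3}, {1, 3}, {0, 1, 3}, {2, 3}, {0, 2, 3}, {1, 2, 3}, {0, 1, 2, 3}} := by decide
  rw [this]
  repeat rw [Finset.prod_insert (by decide)]
  simp [mul_assoc]

theorem v2_eq : (![xP, yP] : Fin 2 → R4) = fun j => X ((![0, 1] : Fin 2 → Fin 4) j) := by
  funext j; fin_cases j <;> rfl
theorem v3_eq : (![xP, yP, zP] : Fin 3 → R4) = fun j => X ((![0, 1, 2] : Fin 3 → Fin 4) j) := by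
  funext j; fin_cases j <;> rfl
theorem v4_eq : (![xP, yP, zP, wP] : Fin 4 → R4) = fun j => X (id j) := by
  funext j; fin_cases j <;> rfl

theorem span3_poly : ∏ α ∈ spanF2 ![xP, yP, zP], (Polynomial.X + Polynomial.C α) =
    P3 (Polynomial.C xP) (Polynomial.C yP) (Polynomial.C zP) Polynomial.X := by
  rw [prod_span _ _ (by decide) v3_eq, prod3 _ (fun a => Polynomial.X + Polynomial.C a), ← P3_prod two_R4X]
  simp

theorem span4_poly : ∏ α ∈ spanF2 ![xP, yP, zP, wP], (Polynomial.X + Polynomial.C α) =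
    P4 (Polynomial.C xP) (Polynomial.C yP) (Polynomial.C zP) (Polynomial.C wP) Polynomial.X := by
  rw [prod_span _ _ (by decide) v4_eq, prod4 _ (fun a => Polynomial.X + Polynomial.C a), ← P4_prod two_R4X]
  simp

theorem dickson_coeff {n : ℕ} (v : Fin n → R4) (h : (spanF2 v).card = 2 ^ n) (i : ℕ) :
    dickson v i = (∏ α ∈ spanF2 v, (Polynomial.X + Polynomial.C α)).coeff (2 ^ (n - i)) := by
  have h' : Multiset.card (spanF2 v).val = 2 ^ n := h
  have := Multiset.prod_X_add_C_coeff (spanF2 v).val (k := 2 ^ (n - i))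
    (by rw [h']; exact Nat.pow_le_pow_right (by norm_num) (Nat.sub_le _ _))
  rw [h'] at this
  exact this.symm

section maps
variable {S S' : Type*} [CommRing S] [CommRing S'] {F : Type*} [FunLike F S S'] [RingHomClass F S S']
theorem map_P2 (f : F) (x y t : S) : f (P2 x y t) = P2 (f x) (f y) (f t) := by
  simp [P2]
theorem map_B4 (f : F) (x y t : S) : f (B4 x y t) = B4 (f x) (f y) (f t) := by
  simp [B4, map_P2]
theorem map_B6 (f : F) (x y t : S) : f (B6 x y t) = B6 (f x) (f y) (f t) := by
  simp [B6, map_P2]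
theorem map_B7 (f : F) (x y t : S) : f (B7 x y t) = B7 (f x) (f y) (f t) := by
  simp [B7, map_P2]
theorem map_P3 (f : F) (x y z t : S) : f (P3 x y z t) = P3 (f x) (f y) (f z) (f t) := by
  simp [P3, map_B4, map_B6, map_B7]
end maps

theorem coeff_aux3 (p q r : R4) (k : ℕ) :
    ((Polynomial.X : Polynomial R4) ^ 8 + Polynomial.C p * Polynomial.X ^ 4 + Polynomial.C q * Polynomial.X ^ 2 + Polynomial.C r * Polynomial.X).coeff k =
     (if k = 8 then 1 else 0) + (if k = 4 then p else 0) + (if k = 2 then q else 0)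
      + (if k = 1 then r else 0) := by
  simp only [Polynomial.coeff_add, Polynomial.coeff_X_pow, Polynomial.coeff_C_mul, Polynomial.coeff_X, mul_ite, mul_one, mul_zero,
    eq_comm (a := 1) (b := k)]

theorem coeff_aux4 (o p q r : R4) (k : ℕ) :
    ((Polynomial.X : Polynomial R4) ^ 16 + Polynomial.C o * Polynomial.X ^ 8 + Polynomial.C p * Polynomial.X ^ 4 + Polynomial.C q * Polynomial.X ^ 2 + Polynomial.C r * Polynomial.X).coeff k =
     (if k = 16 then 1 else 0) + (if k = 8 then o else 0) + (if k = 4 then p else 0)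
      + (if k = 2 then q else 0) + (if k = 1 then r else 0) := by
  simp only [Polynomial.coeff_add, Polynomial.coeff_X_pow, Polynomial.coeff_C_mul, Polynomial.coeff_X, mul_ite, mul_one, mul_zero,
    eq_comm (a := 1) (b := k)]

theorem b_coeff (i : ℕ) : dickson ![xP, yP, zP] i =
    ((if 2 ^ (3 - i) = 8 then 1 else 0) + (if 2 ^ (3 - i) = 4 then B4 xP yP zP else 0)
      + (if 2 ^ (3 - i) = 2 then B6 xP yP zP else 0)
      + (if 2 ^ (3 - i) = 1 then B7 xP yP zP else 0)) := by
  rw [dickson_coeff _ (card_span _ _ (by decide) v3_eq), span3_poly, ← coeff_aux3, P3,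
    ← map_B4, ← map_B6, ← map_B7]

theorem b4_eq : b4 = B4 xP yP zP := by
  unfold b4; rw [b_coeff]; norm_num
theorem b6_eq : b6 = B6 xP yP zP := by
  unfold b6; rw [b_coeff]; norm_num
theorem b7_eq : b7 = B7 xP yP zP := by
  unfold b7; rw [b_coeff]; norm_num
theorem b8_eq : b8 = P3 xP yP zP wP := by
  unfold b8 prodAdd
  rw [prod_span _ _ (by decide) v3_eq, prod3 _ (fun a => wP + a), ← P3_prod two_R4]
  simp
theorem c4'_eq : c4' = P2 xP yP zP := by
  unfold c4' prodAdd
  rw [prod_span _ _ (by decide) v2_eq, prod2 _ (fun a => zP + a), ← P2_prod two_R4]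
  simp

theorem a_coeff (i : ℕ) : dickson ![xP, yP, zP, wP] i =
    ((if 2 ^ (4 - i) = 16 then 1 else 0) + (if 2 ^ (4 - i) = 8 then b8 + b4 ^ 2 else 0)
      + (if 2 ^ (4 - i) = 4 then b4 * b8 + b6 ^ 2 else 0)
      + (if 2 ^ (4 - i) = 2 then b6 * b8 + b7 ^ 2 else 0)
      + (if 2 ^ (4 - i) = 1 then b7 * b8 else 0)) := by
  rw [dickson_coeff _ (card_span _ _ (by decide) v4_eq), span4_poly, ← coeff_aux4, P4,
    ← map_B4, ← map_B6, ← map_B7, ← map_P3, b8_eq, b4_eq, b6_eq, b7_eq]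
  simp only [map_add, map_mul, map_pow]

theorem a8_eq : a8 = b8 + b4 ^ 2 := by
  unfold a8; rw [a_coeff]; norm_num
theorem a12_eq : a12 = b4 * b8 + b6 ^ 2 := by
  unfold a12; rw [a_coeff]; norm_num
theorem a14_eq : a14 = b6 * b8 + b7 ^ 2 := by
  unfold a14; rw [a_coeff]; norm_num
theorem a15_eq : a15 = b7 * b8 := by
  unfold a15; rw [a_coeff]; norm_num

theorem span4_poly' : ∏ α ∈ spanF2 ![xP, yP, zP, wP], (Polynomial.X + Polynomial.C α) =
    Polynomial.X ^ 16 + Polynomial.C a8 * Polynomial.X ^ 8 + Polynomial.C a12 * Polynomial.X ^ 4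
     + Polynomial.C a14 * Polynomial.X ^ 2 + Polynomial.C a15 * Polynomial.X := by
  rw [span4_poly, P4, ← map_B4, ← map_B6, ← map_B7, ← map_P3, a8_eq, a12_eq, a14_eq, a15_eq,
    b8_eq, b4_eq, b6_eq, b7_eq]
  simp only [map_add, map_mul, map_pow]

theorem aev_x {S : Type*} [CommRing S] [Algebra (ZMod 2) S] (v : Fin 4 → S) : aeval v xP = v 0 := aeval_X v 0
theorem aev_y {S : Type*} [CommRing S] [Algebra (ZMod 2) S] (v : Fin 4 → S) : aeval v yP = v 1 := aeval_X v 1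
theorem aev_z {S : Type*} [CommRing S] [Algebra (ZMod 2) S] (v : Fin 4 → S) : aeval v zP = v 2 := aeval_X v 2
theorem aev_w {S : Type*} [CommRing S] [Algebra (ZMod 2) S] (v : Fin 4 → S) : aeval v wP = v 3 := aeval_X v 3

theorem ne_zero_of_eval (p : R4) (v : Fin 4 → ZMod 2) (h : aeval v p = (1 : ZMod 2)) : p ≠ 0 := by
  rintro rfl
  simp at h

theorem P2_ne : P2 xP yP zP ≠ 0 := by
  rw [← P2_prod two_R4]
  refine mul_ne_zero (mul_ne_zero (mul_ne_zero ?_ ?_) ?_) ?_ <;>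
  · apply ne_zero_of_eval _ ![0, 0, 1, 0]
    simp only [map_add, aev_x, aev_y, aev_z]
    simp

theorem B7_ne : B7 xP yP zP ≠ 0 := by
  unfold B7
  refine mul_ne_zero ?_ P2_ne
  have : xP ^ 2 * yP + xP * yP ^ 2 = xP * yP * (xP + yP) := by ring
  rw [this]
  refine mul_ne_zero (mul_ne_zero ?_ ?_) ?_
  · apply ne_zero_of_eval _ ![1, 0, 0, 0]; simp [aev_x]
  · apply ne_zero_of_eval _ ![0, 1, 0, 0]; simp [aev_y]
  · apply ne_zero_of_eval _ ![1, 0, 0, 0]; simp only [map_add, aev_x, aev_y]; simp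

def epsW : R4 →ₐ[ZMod 2] R4 := aeval ![xP, yP, zP, 0]

theorem eps_x : epsW xP = xP := aev_x _
theorem eps_y : epsW yP = yP := aev_y _
theorem eps_z : epsW zP = zP := aev_z _
theorem eps_w : epsW wP = 0 := aev_w _

theorem w_not_dvd {p : R4} (h : epsW p ≠ 0) : ¬ wP ∣ p := by
  rintro ⟨q, rfl⟩
  simp [eps_w] at h

theorem w_prime : Prime wP := X_prime

theorem kap_x : kappaEnd xP = xP := aev_x _
theorem kap_y : kappaEnd yP = yP := aev_y _
theorem kap_z : kappaEnd zP = wP := aev_z _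
theorem kap_w : kappaEnd wP = zP := aev_w _

theorem w_pow_dvd (β : R4) (i : ℕ) (hκ : kappaEnd (β * c4' ^ i) = β * c4' ^ i) : wP ^ i ∣ β := by
  have h1 : wP ^ i ∣ β * c4' ^ i := by
    rw [← hκ, map_mul, map_pow, c4'_eq, map_P2, kap_x, kap_y, kap_z]
    refine Dvd.dvd.mul_left (pow_dvd_pow_of_dvd ?_ i) _
    unfold P2
    exact ⟨wP ^ 3 + (xP ^ 2 + xP * yP + yP ^ 2) * wP + (xP ^ 2 * yP + xP * yP ^ 2), by ring⟩
  refine w_prime.pow_dvd_of_dvd_mul_right i ?_ h1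
  intro h
  refine w_not_dvd ?_ (w_prime.dvd_of_dvd_pow h)
  rw [c4'_eq, map_P2, eps_x, eps_y, eps_z]
  exact P2_ne

theorem decomp (β : R4) (hβ : β ∈ Algebra.adjoin (ZMod 2) {b4, b6, b7, b8}) :
    ∃ p, epsW p = p ∧ ∃ q ∈ Algebra.adjoin (ZMod 2) {b4, b6, b7, b8}, β = p + b8 * q := by
  suffices h : ∃ p ∈ Algebra.adjoin (ZMod 2) {b4, b6, b7, b8}, epsW p = p ∧
      ∃ q ∈ Algebra.adjoin (ZMod 2) {b4, b6, b7, b8}, β = p + b8 * q by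
    obtain ⟨p, _, h⟩ := h
    exact ⟨p, h⟩
  have hb8 : b8 ∈ Algebra.adjoin (ZMod 2) {b4, b6, b7, b8} := Algebra.subset_adjoin (by simp)
  induction hβ using Algebra.adjoin_induction with
  | mem x hx =>
    have hx' := Algebra.subset_adjoin (R := ZMod 2) hx
    simp only [Set.mem_insert_iff, Set.mem_singleton_iff] at hx
    rcases hx with rfl | rfl | rfl | rfl
    · refine ⟨_, hx', ?_, 0, zero_mem _, by simp⟩
      rw [b4_eq, map_B4, eps_x, eps_y, eps_z]
    · refine ⟨_, hx', ?_, 0, zero_mem _, by simp⟩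
      rw [b6_eq, map_B6, eps_x, eps_y, eps_z]
    · refine ⟨_, hx', ?_, 0, zero_mem _, by simp⟩
      rw [b7_eq, map_B7, eps_x, eps_y, eps_z]
    · exact ⟨0, zero_mem _, map_zero _, 1, one_mem _, by simp⟩
  | algebraMap r =>
    exact ⟨_, Subalgebra.algebraMap_mem _ r, AlgHom.commutes _ _, 0, zero_mem _, by simp⟩
  | add x y _ _ hx hy =>
    obtain ⟨p, hp, hp', q, hq, rfl⟩ := hx
    obtain ⟨p₁, hp₁, hp₁', q₁, hq₁, rfl⟩ := hy
    exact ⟨p + p₁, add_mem hp hp₁, by rw [map_add, hp', hp₁'], q + q₁, add_mem hq hq₁, by ring⟩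
  | mul x y _ _ hx hy =>
    obtain ⟨p, hp, hp', q, hq, rfl⟩ := hx
    obtain ⟨p₁, hp₁, hp₁', q₁, hq₁, rfl⟩ := hy
    exact ⟨p * p₁, mul_mem hp hp₁, by rw [map_mul, hp', hp₁'], p * q₁ + q * p₁ + b8 * (q * q₁),
      add_mem (add_mem (mul_mem hp hq₁) (mul_mem hq hp₁)) (mul_mem hb8 (mul_mem hq hq₁)), by ring⟩

def u7 : R4 := wP ^ 7 + B4 xP yP zP * wP ^ 3 + B6 xP yP zP * wP + B7 xP yP zP

theorem b8_u : b8 = wP * u7 := by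
  rw [b8_eq, P3, u7]; ring

theorem eps_b8 : epsW b8 = 0 := by rw [b8_u, map_mul, eps_w, zero_mul]

theorem u_not_dvd : ¬ wP ∣ u7 := by
  apply w_not_dvd
  simp only [u7, map_add, map_mul, map_pow, map_B7, eps_x, eps_y, eps_z, eps_w]
  simpa using B7_ne

theorem b8_pow_dvd (i : ℕ) : ∀ (β : R4), β ∈ Algebra.adjoin (ZMod 2) {b4, b6, b7, b8} →
    wP ^ i ∣ β → ∃ γ ∈ Algebra.adjoin (ZMod 2) {b4, b6, b7, b8}, β = γ * b8 ^ i := by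
  induction i with
  | zero => intro β h _; exact ⟨β, h, by simp⟩
  | succ i ih =>
    intro β hβ hd
    obtain ⟨p, hp, q, hq, rfl⟩ := decomp β hβ
    have hp0 : p = 0 := by
      obtain ⟨r, hr⟩ := hd
      have := congrArg epsW hr
      rw [map_add, map_mul, eps_b8, map_mul, map_pow, eps_w, hp] at this
      simpa using this
    subst hp0
    rw [zero_add, b8_u, pow_succ', mul_assoc] at hd
    have h1 := (mul_dvd_mul_iff_left w_prime.ne_zero).1 hd
    have h2 := w_prime.pow_dvd_of_dvd_mul_left i u_not_dvd h1
    obtain ⟨γ, hγ, rfl⟩ := ih q hq h2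
    exact ⟨γ, hγ, by ring⟩

theorem b8_ne : b8 ≠ 0 := by
  rw [b8_u]
  refine mul_ne_zero w_prime.ne_zero ?_
  rintro h
  exact u_not_dvd (h ▸ dvd_zero _)

theorem kap_bc : kappaEnd (b8 * c4') = b8 * c4' := by
  rw [b8_eq, c4'_eq, P3_eq two_R4]
  simp only [map_mul, map_add, map_P2, kap_x, kap_y, kap_z, kap_w]
  ring

theorem kap_gamma (γ : R4) (i : ℕ) (hκ : kappaEnd (γ * b8 ^ i * c4' ^ i) = γ * b8 ^ i * c4' ^ i) :
    kappaEnd γ = γ := by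
  rw [mul_assoc, ← mul_pow, map_mul, map_pow, kap_bc] at hκ
  refine mul_right_cancel₀ (pow_ne_zero i (mul_ne_zero b8_ne ?_)) hκ
  rw [c4'_eq]; exact P2_ne

/-! Invariance under linear substitutions -/

def act (M : Matrix (Fin 4) (Fin 4) (ZMod 2)) : R4 →ₐ[ZMod 2] R4 :=
  aeval (fun j => ∑ k, C (M j k) * X k)

theorem act_X (M : Matrix (Fin 4) (Fin 4) (ZMod 2)) (j : Fin 4) :
    act M (X j) = ∑ k, C (M j k) * X k := aeval_X _ _

theorem act_C (M : Matrix (Fin 4) (Fin 4) (ZMod 2)) (c : ZMod 2) :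
    act M (C c) = C c := (act M).commutes c

theorem act_mul (M N : Matrix (Fin 4) (Fin 4) (ZMod 2)) (p : R4) :
    act (M * N) p = act N (act M p) := by
  have : act (M * N) = (act N).comp (act M) := by
    apply MvPolynomial.algHom_ext
    intro j
    simp only [AlgHom.comp_apply, act_X, map_sum, map_mul, act_C, Matrix.mul_apply, Finset.mul_sum,
      Finset.sum_mul]
    rw [Finset.sum_comm]
    simp only [mul_assoc]
  rw [this]; rfl

theorem act_one (p : R4) : act 1 p = p := by
  have : act 1 = AlgHom.id (ZMod 2) R4 := by
    apply MvPolynomial.algHom_ext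
    intro j
    simp [act_X, Matrix.one_apply]
  rw [this]; rfl

theorem act_tv_X (i j k : Fin 4) :
    act (Matrix.transvection i j 1) (X k) = X k + (if k = i then X j else 0) := by
  rw [act_X]
  simp only [Matrix.transvection, Matrix.add_apply, Matrix.one_apply, Matrix.single_apply, map_add, add_mul,
    Finset.sum_add_distrib]
  congr 1
  · simp
  · by_cases h : k = i
    · subst h; simp
    · simp [h, Ne.symm h]

theorem act_tv_fix (γ : R4) (hγ : γ ∈ Algebra.adjoin (ZMod 2) {b4, b6, b7, b8})
    (φ : R4 →ₐ[ZMod 2] R4)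
    (h4 : B4 (φ xP) (φ yP) (φ zP) = B4 xP yP zP)
    (h6 : B6 (φ xP) (φ yP) (φ zP) = B6 xP yP zP)
    (h7 : B7 (φ xP) (φ yP) (φ zP) = B7 xP yP zP)
    (hw : P3 xP yP zP (φ wP) = P3 xP yP zP wP) : φ γ = γ := by
  induction hγ using Algebra.adjoin_induction with
  | mem x hx =>
    simp only [Set.mem_insert_iff, Set.mem_singleton_iff] at hx
    rcases hx with rfl | rfl | rfl | rfl
    · rw [b4_eq, map_B4, h4]
    · rw [b6_eq, map_B6, h6]
    · rw [b7_eq, map_B7, h7]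
    · rw [b8_eq, map_P3, P3, h4, h6, h7]; exact hw
  | algebraMap r => exact AlgHom.commutes _ _
  | add x y _ _ hx hy => rw [map_add, hx, hy]
  | mul x y _ _ hx hy => rw [map_mul, hx, hy]

section sameB
variable {S : Type*} [CommRing S]

def SameB (x y z x' y' z' : S) : Prop :=
  B4 x y z = B4 x' y' z' ∧ B6 x y z = B6 x' y' z' ∧ B7 x y z = B7 x' y' z'

theorem SameB.trans {x y z x' y' z' x'' y'' z'' : S} (h : SameB x y z x' y' z')
    (h' : SameB x' y' z' x'' y'' z'') : SameB x y z x'' y'' z'' :=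
  ⟨h.1.trans h'.1, h.2.1.trans h'.2.1, h.2.2.trans h'.2.2⟩

theorem sameB_12 (x y z : S) : SameB x y z y x z := by
  refine ⟨?_, ?_, ?_⟩ <;> simp only [B4, B6, B7, P2] <;> ring

theorem sameB_13 (h2 : (2 : S) = 0) (x y z : S) : SameB x y z z y x := by
  refine ⟨?_, ?_, ?_⟩
  · simp only [B4, P2]
    linear_combination (x ^ 3 * y + x ^ 2 * y ^ 2 + x * y ^ 3 - z ^ 3 * y - z ^ 2 * y ^ 2
      - z * y ^ 3) * h2
  · simp only [B6, P2]
    linear_combination (x ^ 3 * y ^ 3 - z ^ 3 * y ^ 3 + x ^ 3 * y * z ^ 2 - z ^ 3 * y * x ^ 2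
      + x ^ 3 * y ^ 2 * z - z ^ 3 * y ^ 2 * x) * h2
  · simp only [B7, ← P2_prod h2]
    ring

theorem sameB_add12 (h2 : (2 : S) = 0) (x y z : S) : SameB (x + y) y z x y z := by
  have e2 : (x + y) ^ 2 + (x + y) * y + y ^ 2 = x ^ 2 + x * y + y ^ 2 := by
    linear_combination (x * y + y ^ 2) * h2
  have e3 : (x + y) ^ 2 * y + (x + y) * y ^ 2 = x ^ 2 * y + x * y ^ 2 := by
    linear_combination (x * y ^ 2 + y ^ 3) * h2
  refine ⟨?_, ?_, ?_⟩ <;> simp only [B4, B6, B7, P2, e2, e3]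

theorem sameB_23 (h2 : (2 : S) = 0) (x y z : S) : SameB x y z x z y :=
  ((sameB_12 x y z).trans (sameB_13 h2 y x z)).trans (sameB_12 z x y)

theorem sameB_add13 (h2 : (2 : S) = 0) (x y z : S) : SameB (x + z) y z x y z :=
  ((sameB_23 h2 _ _ _).trans (sameB_add12 h2 x z y)).trans (sameB_23 h2 _ _ _)

theorem sameB_add21 (h2 : (2 : S) = 0) (x y z : S) : SameB x (y + x) z x y z :=
  ((sameB_12 _ _ _).trans (sameB_add12 h2 y x z)).trans (sameB_12 _ _ _)

theorem sameB_add23 (h2 : (2 : S) = 0) (x y z : S) : SameB x (y + z) z x y z :=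
  ((sameB_12 _ _ _).trans (sameB_add13 h2 y x z)).trans (sameB_12 _ _ _)

theorem sameB_add31 (h2 : (2 : S) = 0) (x y z : S) : SameB x y (z + x) x y z :=
  ((sameB_13 h2 _ _ _).trans (sameB_add13 h2 z y x)).trans (sameB_13 h2 _ _ _)

theorem sameB_add32 (h2 : (2 : S) = 0) (x y z : S) : SameB x y (z + y) x y z :=
  ((sameB_13 h2 _ _ _).trans (sameB_add12 h2 z y x)).trans (sameB_13 h2 _ _ _)

theorem P3_x (h2 : (2 : S) = 0) (x y z : S) : P3 x y z x = 0 := by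
  rw [← P3_prod h2]; linear_combination (x * x * (x + y) * (x + (x + y)) *
      ((x + z) * (x + (x + z)) * (x + (y + z)) * (x + (x + (y + z))))) * h2
theorem P3_y (h2 : (2 : S) = 0) (x y z : S) : P3 x y z y = 0 := by
  rw [← P3_prod h2]; linear_combination (y * (y + x) * y * (y + (x + y)) *
      ((y + z) * (y + (x + z)) * (y + (y + z)) * (y + (x + (y + z))))) * h2
theorem P3_z (h2 : (2 : S) = 0) (x y z : S) : P3 x y z z = 0 := by
  rw [P3_eq h2]; linear_combination (P2 x y z * P2 x y z) * h2

end sameB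

theorem kap_kap (p : R4) : kappaEnd (kappaEnd p) = p := by
  have : kappaEnd.comp kappaEnd = AlgHom.id (ZMod 2) R4 := by
    apply MvPolynomial.algHom_ext
    intro j
    fin_cases j
    · exact (congrArg kappaEnd kap_x).trans kap_x
    · exact (congrArg kappaEnd kap_y).trans kap_y
    · exact (congrArg kappaEnd kap_z).trans kap_w
    · exact (congrArg kappaEnd kap_w).trans kap_z
  exact DFunLike.congr_fun this p

abbrev tv (i j : Fin 4) : R4 →ₐ[ZMod 2] R4 := act (Matrix.transvection i j 1)

theorem tv_x (i j : Fin 4) : tv i j xP = xP + (if 0 = i then X j else 0) := act_tv_X i j 0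
theorem tv_y (i j : Fin 4) : tv i j yP = yP + (if 1 = i then X j else 0) := act_tv_X i j 1
theorem tv_z (i j : Fin 4) : tv i j zP = zP + (if 2 = i then X j else 0) := act_tv_X i j 2
theorem tv_w (i j : Fin 4) : tv i j wP = wP + (if 3 = i then X j else 0) := act_tv_X i j 3

theorem X0 : (X 0 : R4) = xP := rfl
theorem X1 : (X 1 : R4) = yP := rfl
theorem X2 : (X 2 : R4) = zP := rfl
theorem X3 : (X 3 : R4) = wP := rfl

theorem tv_fix_of (γ : R4) (hγ : γ ∈ Algebra.adjoin (ZMod 2) {b4, b6, b7, b8}) (i j : Fin 4)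
    (h : SameB (tv i j xP) (tv i j yP) (tv i j zP) xP yP zP)
    (hw : tv i j wP = wP ∨ (∃ t, tv i j wP = wP + t ∧ P3 xP yP zP t = 0)) : tv i j γ = γ := by
  refine act_tv_fix γ hγ _ h.1 h.2.1 h.2.2 ?_
  rcases hw with hw | ⟨t, hw, ht⟩
  · rw [hw]
  · rw [hw, P3_add two_R4, ht, add_zero]

theorem tv_conj (i j i' j' : Fin 4) (h : ∀ k, kappaEnd (tv i j (kappaEnd (X k))) = tv i' j' (X k))
    (γ : R4) (hκ : kappaEnd γ = γ) (hf : tv i j γ = γ) : tv i' j' γ = γ := by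
  have : (kappaEnd.comp ((tv i j).comp kappaEnd)) = tv i' j' := by
    apply MvPolynomial.algHom_ext
    exact h
  rw [← this]
  simp only [AlgHom.comp_apply, hκ, hf]

theorem pairs_ind (P : Fin 4 → Fin 4 → Prop) (h01 : P 0 1) (h02 : P 0 2) (h03 : P 0 3)
    (h10 : P 1 0) (h12 : P 1 2) (h13 : P 1 3) (h20 : P 2 0) (h21 : P 2 1) (h23 : P 2 3)
    (h30 : P 3 0) (h31 : P 3 1) (h32 : P 3 2) (i j : Fin 4) (hij : i ≠ j) : P i j := by
  fin_cases i <;> fin_cases j <;> first | exact absurd rfl hij | assumption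

theorem tv_fix (γ : R4) (hγ : γ ∈ Algebra.adjoin (ZMod 2) {b4, b6, b7, b8})
    (hκ : kappaEnd γ = γ) (i j : Fin 4) (hij : i ≠ j) : tv i j γ = γ := by
  have h01 : tv 0 1 γ = γ := tv_fix_of γ hγ 0 1
    (by simpa [tv_x, tv_y, tv_z, X1] using sameB_add12 two_R4 xP yP zP) (by simp [tv_w])
  have h02 : tv 0 2 γ = γ := tv_fix_of γ hγ 0 2
    (by simpa [tv_x, tv_y, tv_z, X2] using sameB_add13 two_R4 xP yP zP) (by simp [tv_w])
  have h10 : tv 1 0 γ = γ := tv_fix_of γ hγ 1 0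
    (by simpa [tv_x, tv_y, tv_z, X0] using sameB_add21 two_R4 xP yP zP) (by simp [tv_w])
  have h12 : tv 1 2 γ = γ := tv_fix_of γ hγ 1 2
    (by simpa [tv_x, tv_y, tv_z, X2] using sameB_add23 two_R4 xP yP zP) (by simp [tv_w])
  have h20 : tv 2 0 γ = γ := tv_fix_of γ hγ 2 0
    (by simpa [tv_x, tv_y, tv_z, X0] using sameB_add31 two_R4 xP yP zP) (by simp [tv_w])
  have h21 : tv 2 1 γ = γ := tv_fix_of γ hγ 2 1
    (by simpa [tv_x, tv_y, tv_z, X1] using sameB_add32 two_R4 xP yP zP) (by simp [tv_w])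
  have h30 : tv 3 0 γ = γ := tv_fix_of γ hγ 3 0
    (by simp [tv_x, tv_y, tv_z, SameB])
    (Or.inr ⟨xP, by simp [tv_w, X0], P3_x two_R4 _ _ _⟩)
  have h31 : tv 3 1 γ = γ := tv_fix_of γ hγ 3 1
    (by simp [tv_x, tv_y, tv_z, SameB])
    (Or.inr ⟨yP, by simp [tv_w, X1], P3_y two_R4 _ _ _⟩)
  have h32 : tv 3 2 γ = γ := tv_fix_of γ hγ 3 2
    (by simp [tv_x, tv_y, tv_z, SameB])
    (Or.inr ⟨zP, by simp [tv_w, X2], P3_z two_R4 _ _ _⟩)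
  have h03 : tv 0 3 γ = γ := by
    refine tv_conj 0 2 0 3 (fun k => ?_) γ hκ h02
    fin_cases k <;> simp [X0, X1, X2, X3, tv_x, tv_y, tv_z, tv_w, kap_x, kap_y, kap_z, kap_w]
  have h13 : tv 1 3 γ = γ := by
    refine tv_conj 1 2 1 3 (fun k => ?_) γ hκ h12
    fin_cases k <;> simp [X0, X1, X2, X3, tv_x, tv_y, tv_z, tv_w, kap_x, kap_y, kap_z, kap_w]
  have h23 : tv 2 3 γ = γ := by
    refine tv_conj 3 2 2 3 (fun k => ?_) γ hκ h32
    fin_cases k <;> simp [X0, X1, X2, X3, tv_x, tv_y, tv_z, tv_w, kap_x, kap_y, kap_z, kap_w]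
  exact pairs_ind (fun i j => tv i j γ = γ) h01 h02 h03 h10 h12 h13 h20 h21 h23 h30 h31 h32 i j hij

theorem act_fix (γ : R4) (hγ : γ ∈ Algebra.adjoin (ZMod 2) {b4, b6, b7, b8})
    (hκ : kappaEnd γ = γ) (M : Matrix (Fin 4) (Fin 4) (ZMod 2)) (hM : M.det ≠ 0) :
    act M γ = γ := by
  have hz : ∀ c : ZMod 2, c ≠ 0 → c = 1 := by decide
  refine Matrix.diagonal_transvection_induction_of_det_ne_zero (fun M => act M γ = γ) M hM ?_ ?_ ?_
  · intro D hD
    have : D = 1 := by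
      funext k
      rw [Matrix.det_diagonal, Finset.prod_ne_zero_iff] at hD
      exact hz _ (hD k (Finset.mem_univ k))
    subst this
    have e : (Matrix.diagonal 1 : Matrix (Fin 4) (Fin 4) (ZMod 2)) = 1 := Matrix.diagonal_one
    rw [e]
    exact act_one γ
  · rintro ⟨i, j, hij, c⟩
    by_cases hc : c = 0
    · subst hc
      simp [Matrix.TransvectionStruct.toMatrix, act_one]
    · rw [hz c hc]
      exact tv_fix γ hγ hκ i j hij
  · intro A B _ _ hA hB
    rw [act_mul, hA, hB]

/-! Dickson's theorem -/

def avec : Fin 4 → R4 := ![a8, a12, a14, a15]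

theorem range_avec : Set.range avec = {a8, a12, a14, a15} := by
  ext t
  simp [avec, Fin.exists_fin_succ, eq_comm]
  try tauto

theorem mem_span4 (α : R4) : α ∈ spanF2 ![xP, yP, zP, wP] ↔
    ∃ s : Finset (Fin 4), ∑ j ∈ s, (X j : R4) = α := by
  rw [v4_eq]
  unfold spanF2
  letI := Classical.decEq R4
  refine Finset.mem_image.trans ?_
  simp

/-- The Dickson polynomial with coefficients in a ring. -/
def dpoly {S : Type*} [CommRing S] (a b c d : S) : Polynomial S :=
  Polynomial.X ^ 16 + Polynomial.C a * Polynomial.X ^ 8 + Polynomial.C b * Polynomial.X ^ 4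
     + Polynomial.C c * Polynomial.X ^ 2 + Polynomial.C d * Polynomial.X

theorem dpoly_map {S T : Type*} [CommRing S] [CommRing T] (f : S →+* T) (a b c d : S) :
    (dpoly a b c d).map f = dpoly (f a) (f b) (f c) (f d) := by
  simp [dpoly]

theorem dpoly_monic {S : Type*} [CommRing S] (a b c d : S) : (dpoly a b c d).Monic := by
  unfold dpoly
  nontriviality S
  monicity!

theorem dpoly_prod {T : Type*} [CommRing T] (f : R4 →+* T) :
    dpoly (f a8) (f a12) (f a14) (f a15) =
      ∏ α ∈ spanF2 ![xP, yP, zP, wP], (Polynomial.X - Polynomial.C (f α)) := by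
  have h2 : (2 : T) = 0 := by
    have := congrArg f two_R4
    rw [map_ofNat, map_zero] at this
    exact this
  have hneg : ∀ t : T, -t = t := fun t => by linear_combination (-t) * h2
  have : dpoly a8 a12 a14 a15 = ∏ α ∈ spanF2 ![xP, yP, zP, wP],
    (Polynomial.X + Polynomial.C α) := span4_poly'.symm
  rw [← dpoly_map, this, Polynomial.map_prod]
  refine Finset.prod_congr rfl fun α _ => ?_
  rw [sub_eq_add_neg, ← Polynomial.C_neg, hneg]
  simp

theorem dpoly_eval {T : Type*} [CommRing T] (f : R4 →+* T) {α : R4}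
    (hα : α ∈ spanF2 ![xP, yP, zP, wP]) :
    (dpoly (f a8) (f a12) (f a14) (f a15)).eval (f α) = 0 := by
  rw [dpoly_prod, Polynomial.eval_prod]
  exact Finset.prod_eq_zero hα (by simp)

theorem X_mem_span (j : Fin 4) : (X j : R4) ∈ spanF2 ![xP, yP, zP, wP] :=
  (mem_span4 _).2 ⟨{j}, by simp⟩

theorem integral_all {T : Type*} [CommRing T] [Algebra (ZMod 2) T] (f : R4 →ₐ[ZMod 2] T) (p : R4) :
    IsIntegral (Algebra.adjoin (ZMod 2) (Set.range (f ∘ avec))) (f p) := by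
  induction p using MvPolynomial.induction_on with
  | C c =>
    have : f (C c) = algebraMap (Algebra.adjoin (ZMod 2) (Set.range (f ∘ avec))) T
        (algebraMap (ZMod 2) _ c) := f.commutes c
    rw [this]
    exact isIntegral_algebraMap
  | add p q hp hq => rw [map_add]; exact hp.add hq
  | mul_X p j hp =>
    rw [map_mul]
    refine hp.mul ?_
    have hm : ∀ k, f (avec k) ∈ Algebra.adjoin (ZMod 2) (Set.range (f ∘ avec)) :=
      fun k => Algebra.subset_adjoin ⟨k, rfl⟩
    refine ⟨dpoly ⟨_, hm 0⟩ ⟨_, hm 1⟩ ⟨_, hm 2⟩ ⟨_, hm 3⟩, dpoly_monic _ _ _ _, ?_⟩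
    rw [← Polynomial.eval_map, dpoly_map]
    exact dpoly_eval (f : R4 →+* T) (X_mem_span j)

theorem avec_indep : AlgebraicIndependent (ZMod 2) avec := by
  haveI : Algebra.IsIntegral (Algebra.adjoin (ZMod 2) (Set.range avec)) R4 :=
    ⟨fun p => integral_all (AlgHom.id (ZMod 2) R4) p⟩
  have : IsTranscendenceBasis (ZMod 2) avec := by
    refine Algebra.IsAlgebraic.isTranscendenceBasis_of_le_trdeg_of_finite (ZMod 2) avec ?_
    rw [MvPolynomial.trdeg_of_isDomain]
    simp
  exact this.1

abbrev L4 := FractionRing R4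

abbrev iota : R4 →ₐ[ZMod 2] L4 := IsScalarTower.toAlgHom (ZMod 2) R4 L4

theorem iota_inj : Function.Injective iota := IsFractionRing.injective R4 L4

abbrev K4 : IntermediateField (ZMod 2) L4 :=
  IntermediateField.adjoin (ZMod 2) (Set.range (iota ∘ avec))

def aK (k : Fin 4) : K4 := ⟨iota (avec k), IntermediateField.subset_adjoin _ _ ⟨k, rfl⟩⟩

def fK : Polynomial K4 := dpoly (aK 0) (aK 1) (aK 2) (aK 3)

theorem fK_map' : fK.map (algebraMap K4 L4) =
    dpoly (iota a8) (iota a12) (iota a14) (iota a15) := dpoly_map _ _ _ _ _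

theorem fK_map : fK.map (algebraMap K4 L4) =
    ∏ α ∈ spanF2 ![xP, yP, zP, wP], (Polynomial.X - Polynomial.C (iota α)) :=
  fK_map'.trans (dpoly_prod (iota : R4 →+* L4))

theorem fK_ne : fK ≠ 0 := (dpoly_monic _ _ _ _).ne_zero

theorem fK_root (α : R4) (hα : α ∈ spanF2 ![xP, yP, zP, wP]) : Polynomial.aeval (iota α) fK = 0 := by
  rw [← Polynomial.eval_map_algebraMap, fK_map']
  exact dpoly_eval (iota : R4 →+* L4) hα

theorem fK_root_conv (t : L4) (ht : Polynomial.aeval t fK = 0) :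
    ∃ s : Finset (Fin 4), t = iota (∑ j ∈ s, X j) := by
  rw [← Polynomial.eval_map_algebraMap, fK_map, Polynomial.eval_prod, Finset.prod_eq_zero_iff] at ht
  obtain ⟨α, hα, h⟩ := ht
  obtain ⟨s, rfl⟩ := (mem_span4 α).1 hα
  refine ⟨s, ?_⟩
  rw [Polynomial.eval_sub, Polynomial.eval_X, Polynomial.eval_C, sub_eq_zero] at h
  exact h

theorem fK_sep : fK.Separable := by
  rw [← Polynomial.separable_map (algebraMap K4 L4), fK_map, Polynomial.separable_prod_X_sub_C_iff']
  intro x _ y _ h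
  exact iota_inj h

theorem fK_split : fK.IsSplittingField K4 L4 := by
  rw [isSplittingField_iff_intermediateField]
  constructor
  · rw [fK_map]
    exact Polynomial.Splits.prod fun α _ => Polynomial.Splits.X_sub_C _
  · rw [eq_top_iff]
    have h1 : ∀ p : R4, iota p ∈ IntermediateField.adjoin K4 (fK.rootSet L4) := by
      intro p
      induction p using MvPolynomial.induction_on with
      | C c =>
        have : iota (C c) = algebraMap K4 L4 (algebraMap (ZMod 2) K4 c) := iota.commutes c
        rw [this]
        exact IntermediateField.algebraMap_mem _ _
      | add p q hp hq => rw [map_add]; exact add_mem hp hq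
      | mul_X p j hp =>
        rw [map_mul]
        refine mul_mem hp (IntermediateField.subset_adjoin _ _ ?_)
        rw [Polynomial.mem_rootSet']
        exact ⟨by rw [fK_map']; exact (dpoly_monic _ _ _ _).ne_zero, fK_root _ (X_mem_span j)⟩
    intro t _
    obtain ⟨p, q, _, rfl⟩ := IsFractionRing.div_surjective (A := R4) t
    exact div_mem (h1 p) (h1 q)

theorem sigma_fix (σ : L4 ≃ₐ[K4] L4) (γ : R4)
    (hγ : ∀ M : Matrix (Fin 4) (Fin 4) (ZMod 2), M.det ≠ 0 → act M γ = γ) :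
    σ (iota γ) = iota γ := by
  have h : ∀ j : Fin 4, ∃ s : Finset (Fin 4), σ (iota (X j)) = iota (∑ k ∈ s, X k) := by
    intro j
    apply fK_root_conv
    have := fK_root _ (X_mem_span j)
    exact (Polynomial.aeval_algHom_apply σ.toAlgHom _ fK).trans (by rw [this]; exact map_zero _)
  choose s hs using h
  let M : Matrix (Fin 4) (Fin 4) (ZMod 2) := fun j k => if k ∈ s j then 1 else 0
  have hcomp : ((σ.toAlgHom.restrictScalars (ZMod 2)).comp iota) = iota.comp (act M) := by
    apply MvPolynomial.algHom_ext
    intro j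
    refine (hs j).trans ?_
    rw [AlgHom.comp_apply, act_X]
    congr 1
    simp [M, Finset.sum_ite_mem, apply_ite, ite_mul]
  have hc : ∀ p, σ (iota p) = iota (act M p) := fun p => DFunLike.congr_fun hcomp p
  rw [hc, hγ]
  intro hdet
  obtain ⟨v, hv, hv0⟩ := Matrix.exists_vecMul_eq_zero_iff.2 hdet
  apply hv
  have h0 : act M (∑ j, C (v j) * X j) = 0 := by
    simp only [map_sum, map_mul, act_C, act_X, Finset.mul_sum]
    rw [Finset.sum_comm]
    refine Finset.sum_eq_zero fun k _ => ?_
    have := congrFun hv0 k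
    simp only [Matrix.vecMul, dotProduct, Pi.zero_apply] at this
    simp only [← mul_assoc, ← Finset.sum_mul, ← map_mul, ← map_sum, this, map_zero, zero_mul]
  have h1 : (∑ j, C (v j) * X j : R4) = 0 := by
    apply iota_inj
    apply σ.injective
    rw [hc, h0, map_zero, map_zero]
  funext j
  have := congrArg (coeff (Finsupp.single j 1)) h1
  simpa [coeff_sum, coeff_C_mul, coeff_X, Finsupp.single_left_inj] using this

theorem dickson_thm (γ : R4)
    (hγ : ∀ M : Matrix (Fin 4) (Fin 4) (ZMod 2), M.det ≠ 0 → act M γ = γ) :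
    γ ∈ Algebra.adjoin (ZMod 2) {a8, a12, a14, a15} := by
  haveI := fK_split
  haveI : IsGalois K4 L4 := IsGalois.of_separable_splitting_field fK_sep
  haveI : FiniteDimensional K4 L4 := Polynomial.IsSplittingField.finiteDimensional L4 fK
  have hbot : iota γ ∈ (⊥ : IntermediateField K4 L4) :=
    (IsGalois.mem_bot_iff_fixed _).2 fun σ => sigma_fix σ γ hγ
  obtain ⟨g, hg⟩ := IntermediateField.mem_bot.1 hbot
  have hind : AlgebraicIndependent (ZMod 2) (iota ∘ avec) := avec_indep.map' iota_inj
  haveI : IsIntegrallyClosed (Algebra.adjoin (ZMod 2) (Set.range (iota ∘ avec))) :=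
    IsIntegrallyClosed.of_equiv hind.aevalEquiv.toRingEquiv
  open IntermediateField.algebraAdjoinAdjoin in
  have hint : IsIntegral (Algebra.adjoin (ZMod 2) (Set.range (iota ∘ avec))) g := by
    have h := integral_all iota γ
    rw [← hg] at h
    exact (isIntegral_algebraMap_iff (algebraMap K4 L4).injective).1 h
  open IntermediateField.algebraAdjoinAdjoin in
  obtain ⟨y, hy⟩ := (isIntegrallyClosed_iff K4).1 this hint
  have hmem : iota γ ∈ Algebra.adjoin (ZMod 2) (Set.range (iota ∘ avec)) := by
    rw [← hg, ← hy]
    exact y.2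
  rw [Set.range_comp, ← AlgHom.map_adjoin, range_avec] at hmem
  obtain ⟨p, hp, hpe⟩ := hmem
  rw [← iota_inj hpe]
  exact hp


theorem stmt_13 (β : R4) (i : ℕ) (hβ : β ∈ Algebra.adjoin (ZMod 2) {b4, b6, b7, b8})
    (hκ : kappaEnd (β * c4' ^ i) = β * c4' ^ i) :
    ∃ β' ∈ Algebra.adjoin (ZMod 2) {a8, a12, a14, a15}, β = β' * b8 ^ i := by
  obtain ⟨γ, hγ, rfl⟩ := b8_pow_dvd i β hβ (w_pow_dvd β i hκ)
  exact ⟨γ, dickson_thm γ (act_fix γ hγ (kap_gamma γ i hκ)), rfl⟩
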